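/- arXiv:1104.4820 — 2 statements merged into one kernel-verified Lean document; each statement's English description precedes it below -/
import Mathlib

section
/- An operator A ∈ 𝒯 is compact if and only if its k-th Fourier coefficient A_k is a compact operator for every k ∈ ℤ. -/
/-- `T_{n,m} = Tⁿ (T*)ᵐ` for a bounded operator `T` on a complex Hilbert space. -/
noncomputable def Tnm {H : Type*} [NormedAddCommGroup H] [InnerProductSpace ℂ H]
    [CompleteSpace H] (T : H →L[ℂ] H) (n m : ℕ) : H →L[ℂ] H :=
  T ^ n * (ContinuousLinearMap.adjoint T) ^ m

/-- The Toeplitz algebra: the norm-closed star-subalgebra of `B(H)` generated by `T`. -/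
noncomputable def ToeplitzAlg {H : Type*} [NormedAddCommGroup H] [InnerProductSpace ℂ H]
    [CompleteSpace H] (T : H →L[ℂ] H) : StarSubalgebra ℂ (H →L[ℂ] H) :=
  StarAlgebra.elemental ℂ T

/-- The `k`-th Fourier coefficient `A_k = (1/2π) ∫₀^{2π} e^{-ikθ} U_θ A U_θ* dθ`
(a Bochner integral in `B(H)`). -/
noncomputable def opFourierCoeff {H : Type*} [NormedAddCommGroup H] [InnerProductSpace ℂ H]
    [CompleteSpace H] (U : ℝ → H →L[ℂ] H) (A : H →L[ℂ] H) (k : ℤ) : H →L[ℂ] H :=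
  (2 * Real.pi)⁻¹ • ∫ θ in (0 : ℝ)..(2 * Real.pi),
    Complex.exp (-(k : ℂ) * θ * Complex.I) • (U θ * A * ContinuousLinearMap.adjoint (U θ))

/-!
Let `α θ A = U θ * A * (U θ)*`. Since `α θ T = e^{iθ} T` and every `α θ` is a contractive star
homomorphism, the orbit `θ ↦ α θ A` of each `A` in the Toeplitz algebra is norm continuous and
`2π`-periodic, and the `A_k` are its Fourier coefficients. A continuous function on the circle takes
its values in a closed subspace `K` exactly when its Fourier coefficients lie in `K`: modulo `K`,
this says that a continuous function whose Fourier coefficients all vanish is zero. For `K` the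
compact operators, the orbit of `A` lies in `K` exactly when `A = α 0 A` does, as `K` is an ideal.
-/

open AddCircle ContinuousLinearMap Function MeasureTheory

section FourierCoeff

variable {P : ℝ} [Fact (0 < P)] {E F : Type*} [NormedAddCommGroup E] [NormedSpace ℂ E]
  [CompleteSpace E] [NormedAddCommGroup F] [NormedSpace ℂ F] [CompleteSpace F]

theorem fourierCoeff_clm_comp (L : E →L[ℂ] F) {f : AddCircle P → E}
    (hf : Integrable f haarAddCircle) (n : ℤ) :
    fourierCoeff (fun x => L (f x)) n = L (fourierCoeff f n) := by
  simpa only [fourierCoeff, map_smul] using L.integral_comp_comm (hf.fourier_smul (-n))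

theorem eq_zero_of_fourierCoeff_eq_zero {f : AddCircle P → E} (hf : Continuous f)
    (h : ∀ n, fourierCoeff f n = 0) : f = 0 := by
  have hint : Integrable f haarAddCircle :=
    hf.integrable_of_hasCompactSupport (.of_compactSpace f)
  funext x
  refine SeparatingDual.eq_zero_of_forall_dual_eq_zero (R := ℂ) fun φ => ?_
  let g : C(AddCircle P, ℂ) := ⟨fun y => φ (f y), by fun_prop⟩
  have hg : fourierCoeff g = 0 := funext fun n =>
    (fourierCoeff_clm_comp φ hint n).trans (by rw [h n, map_zero, Pi.zero_apply])
  have hsum : HasSum (fun n => fourierCoeff g n • fourier n x) (g x) :=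
    has_pointwise_sum_fourier_series_of_summable (hg ▸ summable_zero) x
  simp only [hg, Pi.zero_apply, zero_smul] at hsum
  exact hsum.unique hasSum_zero

theorem forall_fourierCoeff_mem_iff {K : Submodule ℂ E} (hK : IsClosed (K : Set E))
    {f : AddCircle P → E} (hf : Continuous f) : (∀ n, fourierCoeff f n ∈ K) ↔ ∀ x, f x ∈ K := by
  have : IsClosed (K : Set E) := hK
  have hmkQ (v : E) : K.mkQL v = 0 ↔ v ∈ K := Submodule.Quotient.mk_eq_zero K
  have hcoeff (n : ℤ) : fourierCoeff (fun x => K.mkQL (f x)) n = K.mkQL (fourierCoeff f n) :=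
    fourierCoeff_clm_comp K.mkQL (hf.integrable_of_hasCompactSupport (.of_compactSpace f)) n
  simp only [← hmkQ, ← hcoeff]
  refine ⟨fun h => congrFun (eq_zero_of_fourierCoeff_eq_zero (by fun_prop) h), fun h n => ?_⟩
  simp [h, fourierCoeff]

end FourierCoeff

theorem continuous_starAlgHom_apply_of_mem_elemental {X B C : Type*} [TopologicalSpace X]
    [CStarAlgebra B] [CStarAlgebra C] (φ : X → B →⋆ₐ[ℂ] C) {b a : B}
    (hb : Continuous fun x => φ x b) (ha : a ∈ StarAlgebra.elemental ℂ b) :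
    Continuous fun x => φ x a := by
  induction ha using StarAlgebra.elemental.induction_on with
  | self => exact hb
  | star_self => simpa only [map_star] using hb.star
  | algebraMap r => simpa only [AlgHomClass.commutes] using continuous_const
  | add u _ v _ hu hv => simpa only [map_add] using! hu.add hv
  | mul u _ v _ hu hv => simpa only [map_mul] using! hu.mul hv
  | closure s _ hs a ha =>
    refine continuous_of_uniform_approx_of_continuous fun V hV => ?_
    obtain ⟨ε, hε, hεV⟩ := Metric.mem_uniformity_dist.1 hV
    obtain ⟨u, hu, hau⟩ := Metric.mem_closure_iff.1 ha ε hε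
    refine ⟨_, hs u hu, fun x => hεV ?_⟩
    calc dist (φ x a) (φ x u) = ‖φ x (a - u)‖ := by rw [dist_eq_norm, map_sub]
      _ ≤ ‖a - u‖ := NonUnitalStarAlgHom.norm_apply_le (φ x) (a - u)
      _ < ε := by rwa [← dist_eq_norm]

section Diagonal

variable {ι 𝕜 H : Type*} [RCLike 𝕜] [NormedAddCommGroup H] [InnerProductSpace 𝕜 H]
  (e : HilbertBasis ι 𝕜 H)

theorem clm_ext_hilbertBasis {F : Type*} [AddCommMonoid F] [Module 𝕜 F] [TopologicalSpace F]
    [T2Space F] {S R : H →L[𝕜] F} (h : ∀ i, S (e i) = R (e i)) : S = R :=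
  ContinuousLinearMap.ext_on (Submodule.dense_iff_topologicalClosure_eq_top.2 e.dense_span)
    (Set.forall_mem_range.2 h)

variable [CompleteSpace H] {D : H →L[𝕜] H} {c : ι → 𝕜}

theorem star_apply_of_diagonal (hD : ∀ i, D (e i) = c i • e i) (i : ι) :
    star D (e i) = star (c i) • e i := by
  classical
  refine e.repr.injective (lp.ext (funext fun j => ?_))
  rw [e.repr_apply_apply, e.repr_apply_apply, star_eq_adjoint, adjoint_inner_right, hD,
    inner_smul_left, inner_smul_right, orthonormal_iff_ite.1 e.orthonormal]
  split_ifs with h <;> simp [h]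

theorem mem_unitary_of_diagonal (hD : ∀ i, D (e i) = c i • e i) (hc : ∀ i, ‖c i‖ = 1) :
    D ∈ unitary (H →L[𝕜] H) := by
  have hstar (i : ι) : star (c i) * c i = 1 := by simp [RCLike.conj_mul, hc]
  refine Unitary.mem_iff.2 ⟨clm_ext_hilbertBasis e fun i => ?_, clm_ext_hilbertBasis e fun i => ?_⟩
  · rw [mul_apply_eq_comp, hD, map_smul, star_apply_of_diagonal e hD, smul_smul, mul_comm, hstar,
      one_smul, one_apply_eq_self]
  · rw [mul_apply_eq_comp, star_apply_of_diagonal e hD, map_smul, hD, smul_smul, hstar, one_smul,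
      one_apply_eq_self]

end Diagonal

section Gauge

variable {ι H : Type*} [NormedAddCommGroup H] [InnerProductSpace ℂ H]
  {e : HilbertBasis ι ℂ H} {d : ι → ℤ} {U : ℝ → H →L[ℂ] H}

/-- `U` is the gauge group `U θ = e^{iθN}` of the grading `d` of the Hilbert basis `e`, where `N` is
the possibly unbounded number operator `N (e i) = d i • e i`. Weights in `ℤ` make it
`2π`-periodic. -/
def IsGaugeGroup (e : HilbertBasis ι ℂ H) (d : ι → ℤ) (U : ℝ → H →L[ℂ] H) : Prop :=
  ∀ θ i, U θ (e i) = Complex.exp (d i * θ * Complex.I) • e i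

namespace IsGaugeGroup

theorem apply_zero (hU : IsGaugeGroup e d U) : U 0 = 1 :=
  clm_ext_hilbertBasis e fun i => by simp [hU 0 i]

theorem periodic (hU : IsGaugeGroup e d U) : Periodic U (2 * Real.pi) := fun θ => by
  refine clm_ext_hilbertBasis e fun i => ?_
  rw [hU, hU]
  congr 1
  refine Complex.exp_eq_exp_iff_exists_int.2 ⟨d i, ?_⟩
  push_cast
  ring

variable [CompleteSpace H]

theorem mem_unitary (hU : IsGaugeGroup e d U) (θ : ℝ) : U θ ∈ unitary (H →L[ℂ] H) :=
  mem_unitary_of_diagonal e (hU θ) fun i => by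
    simpa using Complex.norm_exp_ofReal_mul_I (d i * θ)

theorem conj_eq_smul (hU : IsGaugeGroup e d U) {T : H →L[ℂ] H} {s : ι → ι} {k : ℤ}
    (hT : ∀ i, T (e i) = e (s i)) (hs : ∀ i, d (s i) = d i + k) (θ : ℝ) :
    U θ * T * star (U θ) = Complex.exp (k * θ * Complex.I) • T := by
  have hcomm : U θ * T = (Complex.exp (k * θ * Complex.I) • T) * U θ := by
    refine clm_ext_hilbertBasis e fun i => ?_
    simp only [mul_apply_eq_comp, hT, hU θ, hs, map_smul, smul_apply, smul_smul,
      ← Complex.exp_add]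
    congr 2
    push_cast
    ring
  rw [hcomm, mul_assoc, Unitary.mul_star_self_of_mem (hU.mem_unitary θ), mul_one]

theorem continuous_conj (hU : IsGaugeGroup e d U) {T A : H →L[ℂ] H} {s : ι → ι} {k : ℤ}
    (hT : ∀ i, T (e i) = e (s i)) (hs : ∀ i, d (s i) = d i + k) (hA : A ∈ ToeplitzAlg T) :
    Continuous fun θ => U θ * A * star (U θ) := by
  let α (θ : ℝ) : (H →L[ℂ] H) →⋆ₐ[ℂ] (H →L[ℂ] H) :=
    Unitary.conjStarAlgAut ℂ (H →L[ℂ] H) ⟨U θ, hU.mem_unitary θ⟩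
  have hαT : Continuous fun θ => α θ T := by
    change Continuous fun θ => U θ * T * star (U θ)
    simp only [hU.conj_eq_smul hT hs]
    fun_prop
  exact continuous_starAlgHom_apply_of_mem_elemental α hαT hA

end IsGaugeGroup

end Gauge

section OpFourierCoeff

variable {H : Type*} [NormedAddCommGroup H] [InnerProductSpace ℂ H] [CompleteSpace H]
  {U : ℝ → H →L[ℂ] H} {A : H →L[ℂ] H}

theorem opFourierCoeff_eq_fourierCoeff_lift [Fact (0 < 2 * Real.pi)]
    (h : Periodic (fun θ => U θ * A * adjoint (U θ)) (2 * Real.pi)) (k : ℤ) :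
    opFourierCoeff U A k = fourierCoeff h.lift k := by
  rw [fourierCoeff_eq_intervalIntegral _ _ 0, opFourierCoeff, zero_add, one_div]
  congr 1
  refine intervalIntegral.integral_congr fun θ _ => ?_
  simp only [fourier_coe_apply, h.lift_coe]
  congr 2
  push_cast
  field_simp

theorem isCompactOperator_iff_opFourierCoeff_general (hU : Periodic U (2 * Real.pi))
    (hU₀ : U 0 = 1) (hA : Continuous fun θ => U θ * A * adjoint (U θ)) :
    IsCompactOperator A ↔ ∀ k : ℤ, IsCompactOperator (opFourierCoeff U A k) := by
  have : Fact (0 < 2 * Real.pi) := ⟨Real.two_pi_pos⟩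
  have hper : Periodic (fun θ => U θ * A * adjoint (U θ)) (2 * Real.pi) := fun θ => by
    simp only [hU θ]
  have horbit : IsCompactOperator A ↔ ∀ x, IsCompactOperator (hper.lift x) := by
    constructor
    · intro h x
      induction x using QuotientAddGroup.induction_on with
      | H θ => exact (h.comp_clm (adjoint (U θ))).clm_comp (U θ)
    · intro h
      have h₀ : IsCompactOperator (U 0 * A * adjoint (U 0)) := h (0 : ℝ)
      simpa only [hU₀, ← star_eq_adjoint, star_one, one_mul, mul_one] using h₀
  simp only [horbit, opFourierCoeff_eq_fourierCoeff_lift hper]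
  exact (forall_fourierCoeff_mem_iff (K := compactOperator (RingHom.id ℂ) H H)
    isClosed_setOfPred_isCompactOperator (continuous_quot_lift _ hA)).symm

end OpFourierCoeff

/-- an operator `A ∈ 𝒯` is compact iff all its Fourier coefficients `A_k`
are compact operators. -/
theorem isCompactOperator_iff_opFourierCoeff {H : Type*} [NormedAddCommGroup H]
    [InnerProductSpace ℂ H] [CompleteSpace H] (e : HilbertBasis ℕ ℂ H) (T : H →L[ℂ] H)
    (hT : ∀ n : ℕ, T (e n) = e (n + 1))
    (U : ℝ → H →L[ℂ] H)
    (hU : ∀ (θ : ℝ) (n : ℕ), U θ (e n) = Complex.exp ((n : ℂ) * θ * Complex.I) • e n)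
    (A : H →L[ℂ] H) (hA : A ∈ ToeplitzAlg T) :
    IsCompactOperator (⇑A) ↔ ∀ k : ℤ, IsCompactOperator (⇑(opFourierCoeff U A k)) := by
  have hgauge : IsGaugeGroup e (fun n => n) U := fun θ n => by simpa using hU θ n
  exact isCompactOperator_iff_opFourierCoeff_general hgauge.periodic hgauge.apply_zero
    (hgauge.continuous_conj hT (fun n => Nat.cast_succ n) hA)
end

section
/- Let h be a state on 𝒯. Then the following are equivalent: (i) for every continuous linear functional ρ on 𝒯 there exists λ_ρ ∈ ℂ such that h(T_{n,m})·ρ(T_{n,m}) = λ_ρ·h(T_{n,m}) for all n, m ∈ ℕ; (ii) h(T_{0,0}) = 1 and h(T_{n,m}) = 0 whenever n ≠ 0 or m ≠ 0. Moreover, the unique state satisfying (ii) is h(A) = ⟨A e_0, e_0⟩. -/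
open scoped ComplexInnerProductSpace
open ComplexOrder

/-! Since functionals separate points of `𝒯`, the invariance property says that all the `T_{n,m}` at
which `h` does not vanish are equal, hence, as `h(1) = 1`, equal to `1 = T_{0,0}`. But `T* e₀ = 0`
gives `⟨T_{n,m} e₀, e₀⟩ = 0 ≠ ⟨e₀, e₀⟩` for `(n, m) ≠ (0, 0)`, so `T_{n,m} ≠ 1`. The relation
`T* T = 1` reduces every word in `T` and `T*` to some `T_{n,m}`, so the `T_{n,m}` span a dense
subspace of `𝒯`, on which `h` agrees with the vector functional of `e₀`. -/

section DualSeparation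

variable {ι 𝕜 E : Type*} [Field 𝕜] [TopologicalSpace 𝕜] [AddCommGroup E] [TopologicalSpace E]
  [Module 𝕜 E] [SeparatingDual 𝕜 E]

lemma forall_strongDual_exists_mul_eq_mul_iff (c : ι → 𝕜) (x : ι → E) :
    (∀ ρ : StrongDual 𝕜 E, ∃ lam : 𝕜, ∀ i, c i * ρ (x i) = lam * c i) ↔
      ∀ i j, c i ≠ 0 → c j ≠ 0 → x i = x j := by
  constructor
  · intro hinv i j hi hj
    by_contra hne
    obtain ⟨ρ, hρ⟩ := SeparatingDual.exists_separating_of_ne (R := 𝕜) hne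
    obtain ⟨lam, hlam⟩ := hinv ρ
    have eq_lam {k : ι} (hk : c k ≠ 0) : ρ (x k) = lam :=
      mul_left_cancel₀ hk ((hlam k).trans (mul_comm _ _))
    exact hρ ((eq_lam hi).trans (eq_lam hj).symm)
  · intro hx ρ
    by_cases hc : ∃ i, c i ≠ 0
    · obtain ⟨i, hi⟩ := hc
      refine ⟨ρ (x i), fun j => ?_⟩
      by_cases hj : c j = 0
      · simp [hj]
      · rw [hx i j hi hj, mul_comm]
    · push Not at hc
      exact ⟨0, by simp [hc]⟩

end DualSeparation

section Words

lemma exists_eq_pow_mul_pow_of_mem_closure_pair {M : Type*} [Monoid M] {a b : M}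
    (hba : b * a = 1) {w : M} (hw : w ∈ Submonoid.closure {a, b}) :
    ∃ n m : ℕ, w = a ^ n * b ^ m := by
  induction hw using Submonoid.closure_induction_left with
  | one => exact ⟨0, 0, by simp⟩
  | mul_left x hx w _ ih =>
    obtain ⟨n, m, rfl⟩ := ih
    rcases hx with rfl | rfl
    · exact ⟨n + 1, m, by rw [pow_succ', mul_assoc]⟩
    · cases n with
      | zero => exact ⟨0, m + 1, by simp [pow_succ']⟩
      | succ n => exact ⟨n, m, by rw [pow_succ', ← mul_assoc, ← mul_assoc, hba, one_mul]⟩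

variable {R A : Type*} [CommSemiring R] [StarRing R] [Semiring A] [StarRing A] [Algebra R A]
  [StarModule R A] {a : A}

lemma starAlgebra_adjoin_singleton_subset_span (ha : star a * a = 1) :
    (StarAlgebra.adjoin R {a} : Set A) ⊆
      Submodule.span R (Set.range fun p : ℕ × ℕ => a ^ p.1 * star a ^ p.2) := by
  intro x hx
  rw [SetLike.mem_coe, ← StarSubalgebra.mem_toSubalgebra, StarAlgebra.adjoin_toSubalgebra,
    ← Subalgebra.mem_toSubmodule, Algebra.adjoin_eq_span, Set.star_singleton,
    Set.singleton_union] at hx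
  refine Submodule.span_mono (fun w hw => ?_) hx
  obtain ⟨n, m, rfl⟩ := exists_eq_pow_mul_pow_of_mem_closure_pair ha hw
  exact ⟨(n, m), rfl⟩

lemma starAlgebra_elemental_subset_closure_span [TopologicalSpace A]
    [IsSemitopologicalSemiring A] [ContinuousStar A] (ha : star a * a = 1) :
    (StarAlgebra.elemental R a : Set A) ⊆
      closure (Submodule.span R (Set.range fun p : ℕ × ℕ => a ^ p.1 * star a ^ p.2)) :=
  closure_mono (starAlgebra_adjoin_singleton_subset_span ha)

end Words

section HilbertBasis

variable {ι 𝕜 E F : Type*} [RCLike 𝕜] [NormedAddCommGroup E] [InnerProductSpace 𝕜 E]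
  [NormedAddCommGroup F] [InnerProductSpace 𝕜 F] (e : HilbertBasis ι 𝕜 E)

lemma hilbertBasis_ext_inner_left {x y : E} (hxy : ∀ i, inner 𝕜 (e i) x = inner 𝕜 (e i) y) :
    x = y := by
  apply e.repr.injective
  ext i
  rw [e.repr_apply_apply, e.repr_apply_apply, hxy]

variable [CompleteSpace E] [CompleteSpace F] {T : E →L[𝕜] F}

lemma adjoint_apply_eq_zero_of_hilbertBasis {y : F} (hy : ∀ i, inner 𝕜 (T (e i)) y = 0) :
    ContinuousLinearMap.adjoint T y = 0 :=
  hilbertBasis_ext_inner_left e fun i => by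
    rw [ContinuousLinearMap.adjoint_inner_right, hy, inner_zero_right]

lemma adjoint_comp_self_of_orthonormal (hT : Orthonormal 𝕜 (T ∘ e)) :
    ContinuousLinearMap.adjoint T ∘L T = 1 := by
  classical
  have hdense : Dense (Submodule.span 𝕜 (Set.range e) : Set E) :=
    Submodule.dense_iff_topologicalClosure_eq_top.2 e.dense_span
  refine ContinuousLinearMap.ext_on hdense ?_
  rintro _ ⟨j, rfl⟩
  refine hilbertBasis_ext_inner_left e fun i => ?_
  calc inner 𝕜 (e i) (ContinuousLinearMap.adjoint T (T (e j)))
      = inner 𝕜 (T (e i)) (T (e j)) := ContinuousLinearMap.adjoint_inner_right T _ _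
    _ = if i = j then 1 else 0 := orthonormal_iff_ite.1 hT i j
    _ = inner 𝕜 (e i) (e j) := (orthonormal_iff_ite.1 e.orthonormal i j).symm

end HilbertBasis

section Toeplitz

variable {H : Type*} [NormedAddCommGroup H] [InnerProductSpace ℂ H] [CompleteSpace H]
  {T : H →L[ℂ] H} {v : H} {n m : ℕ}

lemma Tnm_mem_ToeplitzAlg (T : H →L[ℂ] H) (n m : ℕ) : Tnm T n m ∈ ToeplitzAlg T :=
  mul_mem (pow_mem (StarAlgebra.elemental.self_mem ℂ T) n)
    (pow_mem (StarAlgebra.elemental.star_self_mem ℂ T) m)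

/-- The operator `T_{n,m}` as an element of the Toeplitz algebra, the form in which functionals on
the algebra are evaluated at it. -/
noncomputable def toeplitzMonomial (T : H →L[ℂ] H) (n m : ℕ) : ToeplitzAlg T :=
  ⟨Tnm T n m, Tnm_mem_ToeplitzAlg T n m⟩

/-- The vector functional `A ↦ ⟨A v, v⟩` on the Toeplitz algebra; Mathlib's inner product being
conjugate-linear on the left, it is written `⟪v, A v⟫`. -/
noncomputable def vectorFunctional (T : H →L[ℂ] H) (v : H) : ToeplitzAlg T →L[ℂ] ℂ where
  toFun A := ⟪v, (A : H →L[ℂ] H) v⟫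
  map_add' A B := by simp
  map_smul' c A := by simp
  cont := by fun_prop

lemma vectorFunctional_apply (A : ToeplitzAlg T) :
    vectorFunctional T v A = ⟪v, (A : H →L[ℂ] H) v⟫ := rfl

lemma toeplitzMonomial_zero_zero : toeplitzMonomial T 0 0 = 1 :=
  Subtype.ext (by simp [toeplitzMonomial, Tnm])

lemma dense_span_range_toeplitzMonomial (hT : ContinuousLinearMap.adjoint T ∘L T = 1) :
    Dense (Submodule.span ℂ (Set.range fun p : ℕ × ℕ => toeplitzMonomial T p.1 p.2) :
      Set (ToeplitzAlg T)) := by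
  have map_span :
      (Submodule.span ℂ (Set.range fun p : ℕ × ℕ => toeplitzMonomial T p.1 p.2)).map
        (ToeplitzAlg T).subtype.toLinearMap =
      Submodule.span ℂ (Set.range fun p : ℕ × ℕ => T ^ p.1 * star T ^ p.2) := by
    rw [Submodule.map_span, ← Set.range_comp]
    rfl
  rw [Subtype.dense_iff]
  change _ ⊆ closure (Submodule.map (ToeplitzAlg T).subtype.toLinearMap _ : Set (H →L[ℂ] H))
  rw [map_span]
  exact starAlgebra_elemental_subset_closure_span hT

lemma inner_Tnm_apply (T : H →L[ℂ] H) (n m : ℕ) (x y : H) :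
    ⟪x, Tnm T n m y⟫ =
      ⟪(ContinuousLinearMap.adjoint T ^ n) x, (ContinuousLinearMap.adjoint T ^ m) y⟫ := by
  rw [← ContinuousLinearMap.star_eq_adjoint, ← star_pow, ContinuousLinearMap.star_eq_adjoint,
    ContinuousLinearMap.adjoint_inner_left]
  rfl

lemma vectorFunctional_toeplitzMonomial (hv : ContinuousLinearMap.adjoint T v = 0)
    (hnm : n ≠ 0 ∨ m ≠ 0) : vectorFunctional T v (toeplitzMonomial T n m) = 0 := by
  have adjoint_pow_apply {k : ℕ} (hk : k ≠ 0) : (ContinuousLinearMap.adjoint T ^ k) v = 0 := by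
    rw [← Nat.succ_pred_eq_of_ne_zero hk, pow_succ, mul_apply_eq_comp, hv, map_zero]
  refine (inner_Tnm_apply T n m v v).trans ?_
  rcases hnm with hn | hm
  · rw [adjoint_pow_apply hn, inner_zero_left]
  · rw [adjoint_pow_apply hm, inner_zero_right]

lemma toeplitzMonomial_eq_one_iff (hv : ContinuousLinearMap.adjoint T v = 0) (hv₀ : v ≠ 0) :
    toeplitzMonomial T n m = 1 ↔ n = 0 ∧ m = 0 := by
  refine ⟨fun h1 => ?_, ?_⟩
  · by_contra hnm
    have h0 := vectorFunctional_toeplitzMonomial hv (not_and_or.1 hnm)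
    rw [h1] at h0
    exact hv₀ (inner_self_eq_zero.1 h0)
  · rintro ⟨rfl, rfl⟩
    exact toeplitzMonomial_zero_zero

variable {h : ToeplitzAlg T →L[ℂ] ℂ}

theorem forall_exists_mul_eq_mul_iff_toeplitzMonomial (hv : ContinuousLinearMap.adjoint T v = 0)
    (hv₀ : v ≠ 0) (hone : h 1 ≠ 0) :
    (∀ ρ : ToeplitzAlg T →L[ℂ] ℂ, ∃ lam : ℂ, ∀ n m : ℕ,
        h (toeplitzMonomial T n m) * ρ (toeplitzMonomial T n m) =
          lam * h (toeplitzMonomial T n m)) ↔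
      ∀ n m : ℕ, n ≠ 0 ∨ m ≠ 0 → h (toeplitzMonomial T n m) = 0 := by
  have support_eq_iff := forall_strongDual_exists_mul_eq_mul_iff
    (fun p : ℕ × ℕ => h (toeplitzMonomial T p.1 p.2)) fun p => toeplitzMonomial T p.1 p.2
  simp only [Prod.forall] at support_eq_iff
  refine support_eq_iff.trans ⟨fun hsupp n m hnm => ?_, fun hzero n m k l hnm hkl => ?_⟩
  · by_contra hh
    have h1 := hsupp n m 0 0 hh (by rwa [toeplitzMonomial_zero_zero])
    rw [toeplitzMonomial_zero_zero, toeplitzMonomial_eq_one_iff hv hv₀] at h1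
    exact not_and_or.2 hnm h1
  · have eq_one {i j : ℕ} (hij : h (toeplitzMonomial T i j) ≠ 0) : toeplitzMonomial T i j = 1 := by
      by_contra hne
      rw [toeplitzMonomial_eq_one_iff hv hv₀, not_and_or] at hne
      exact hij (hzero i j hne)
    rw [eq_one hnm, eq_one hkl]

theorem eq_vectorFunctional_iff (hT : ContinuousLinearMap.adjoint T ∘L T = 1)
    (hv : ContinuousLinearMap.adjoint T v = 0) (hone : h 1 = vectorFunctional T v 1) :
    h = vectorFunctional T v ↔
      ∀ n m : ℕ, n ≠ 0 ∨ m ≠ 0 → h (toeplitzMonomial T n m) = 0 := by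
  refine ⟨?_, fun hzero => ?_⟩
  · rintro rfl n m hnm
    exact vectorFunctional_toeplitzMonomial hv hnm
  · refine ContinuousLinearMap.ext_on (dense_span_range_toeplitzMonomial hT) ?_
    rintro _ ⟨⟨n, m⟩, rfl⟩
    by_cases hnm : n = 0 ∧ m = 0
    · obtain ⟨rfl, rfl⟩ := hnm
      simpa only [toeplitzMonomial_zero_zero] using hone
    · rw [hzero n m (not_and_or.1 hnm),
        vectorFunctional_toeplitzMonomial hv (not_and_or.1 hnm)]

theorem haar_functional_characterization_general (hT : ContinuousLinearMap.adjoint T ∘L T = 1)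
    (hv : ContinuousLinearMap.adjoint T v = 0) (hnorm : ‖v‖ = 1) (hone : h 1 = 1) :
    ((∀ ρ : ToeplitzAlg T →L[ℂ] ℂ, ∃ lam : ℂ, ∀ n m : ℕ,
        h (toeplitzMonomial T n m) * ρ (toeplitzMonomial T n m) =
          lam * h (toeplitzMonomial T n m)) ↔
      ∀ n m : ℕ, n ≠ 0 ∨ m ≠ 0 → h (toeplitzMonomial T n m) = 0) ∧
    ((∀ n m : ℕ, n ≠ 0 ∨ m ≠ 0 → h (toeplitzMonomial T n m) = 0) ↔
      ∀ A : ToeplitzAlg T, h A = ⟪v, (A : H →L[ℂ] H) v⟫) := by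
  have hv₀ : v ≠ 0 := norm_ne_zero_iff.1 (hnorm ▸ one_ne_zero)
  have hone_v : h 1 = vectorFunctional T v 1 := by
    simp [hone, vectorFunctional_apply, hnorm]
  refine ⟨forall_exists_mul_eq_mul_iff_toeplitzMonomial hv hv₀ (hone ▸ one_ne_zero), ?_⟩
  rw [← eq_vectorFunctional_iff hT hv hone_v]
  exact DFunLike.ext_iff

end Toeplitz

section Shift

variable {𝕜 E : Type*} [RCLike 𝕜] [NormedAddCommGroup E] [InnerProductSpace 𝕜 E]
  [CompleteSpace E] (e : HilbertBasis ℕ 𝕜 E) {T : E →L[𝕜] E}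

lemma adjoint_comp_self_of_shift (hT : ∀ n, T (e n) = e (n + 1)) :
    ContinuousLinearMap.adjoint T ∘L T = 1 := by
  refine adjoint_comp_self_of_orthonormal e ?_
  rw [show T ∘ e = e ∘ Nat.succ from funext hT]
  exact e.orthonormal.comp _ Nat.succ_injective

lemma adjoint_apply_zero_of_shift (hT : ∀ n, T (e n) = e (n + 1)) :
    ContinuousLinearMap.adjoint T (e 0) = 0 :=
  adjoint_apply_eq_zero_of_hilbertBasis e fun n => by
    rw [hT]
    exact e.orthonormal.inner_eq_zero n.succ_ne_zero

end Shift

/-- characterization of the Haar functional on `𝒯`: for a state `h` on `𝒯`,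
the Haar-type invariance property (i) is equivalent to (ii) `h(T_{0,0}) = 1` and
`h(T_{n,m}) = 0` for `(n,m) ≠ (0,0)`; moreover any state satisfying (ii) is
`h(A) = ⟨A e₀, e₀⟩`. -/
theorem haar_functional_characterization {H : Type*} [NormedAddCommGroup H]
    [InnerProductSpace ℂ H] [CompleteSpace H] (e : HilbertBasis ℕ ℂ H) (T : H →L[ℂ] H)
    (hT : ∀ n : ℕ, T (e n) = e (n + 1))
    (h : (ToeplitzAlg T) →L[ℂ] ℂ)
    (hpos : ∀ a : ToeplitzAlg T, 0 ≤ h (star a * a)) (hone : h 1 = 1) :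
    ((∀ ρ : (ToeplitzAlg T) →L[ℂ] ℂ, ∃ lam : ℂ,
        ∀ (n m : ℕ) (hnm : Tnm T n m ∈ ToeplitzAlg T),
          h ⟨Tnm T n m, hnm⟩ * ρ ⟨Tnm T n m, hnm⟩ = lam * h ⟨Tnm T n m, hnm⟩) ↔
      ((∀ h00 : Tnm T 0 0 ∈ ToeplitzAlg T, h ⟨Tnm T 0 0, h00⟩ = 1) ∧
        (∀ (n m : ℕ) (hnm : Tnm T n m ∈ ToeplitzAlg T), (n ≠ 0 ∨ m ≠ 0) →
          h ⟨Tnm T n m, hnm⟩ = 0))) ∧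
    (((∀ h00 : Tnm T 0 0 ∈ ToeplitzAlg T, h ⟨Tnm T 0 0, h00⟩ = 1) ∧
        (∀ (n m : ℕ) (hnm : Tnm T n m ∈ ToeplitzAlg T), (n ≠ 0 ∨ m ≠ 0) →
          h ⟨Tnm T n m, hnm⟩ = 0)) →
      ∀ A : ToeplitzAlg T, h A = ⟪e 0, (A : H →L[ℂ] H) (e 0)⟫) := by
  have general := haar_functional_characterization_general (h := h)
    (adjoint_comp_self_of_shift e hT) (adjoint_apply_zero_of_shift e hT)
    (e.orthonormal.norm_eq_one 0) hone
  have hzero : h ⟨Tnm T 0 0, Tnm_mem_ToeplitzAlg T 0 0⟩ = 1 :=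
    (congrArg h toeplitzMonomial_zero_zero).trans hone
  simpa only [toeplitzMonomial, Tnm_mem_ToeplitzAlg, forall_true_left, hzero, true_and] using
    ⟨general.1, general.2.1⟩
end
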